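/- arXiv:math/0301057 — 6 statements merged into one kernel-verified Lean document; each statement's English description precedes it below -/
import Mathlib

section
/- Let l be a nonempty list of Booleans, read cyclically (entry i is followed by entry (i+1) mod (length of l)). If the number of entries equal to true is strictly greater than the number of entries equal to false, then there exists an index i such that both the entry at position i and the entry at position (i+1) mod (length l) are true. (This is the combinatorial fact that a turn pattern with more left turns than right turns contains two consecutive left turns, hence an exposed path of length 3.) -/
theorem turn_aux (l : List Bool)
    (hn : ∀ i, i + 1 < l.length → l.getD i false = true → l.getD (i+1) false = true → False) :
    l.count true ≤ l.count false + 1 ∧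
    (l.count true = l.count false + 1 → l.getD 0 false = true ∧ l.getD (l.length - 1) false = true) ∧
    (l ≠ [] → l.count true = l.count false → l.getD 0 false = false →
      l.getD (l.length - 1) false = true) := by
  induction l with
  | nil => simp
  | cons a t ih =>
    have ih' := ih (fun i hi h1 h2 => hn (i+1) (by simpa using hi) (by simpa using h1)
      (by simpa using h2))
    obtain ⟨i1, i2, i3⟩ := ih'
    have h0 := hn 0
    cases t with
    | nil => cases a <;> simp
    | cons b s =>
      have hlast : (a :: b :: s).getD ((a :: b :: s).length - 1) false
        = (b :: s).getD ((b :: s).length - 1) false := by simp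
      rw [hlast]
      generalize (b :: s).getD ((b :: s).length - 1) false = z at *
      cases a <;> cases b <;> simp at * <;> grind

/-- A cyclic turn pattern with strictly more left turns (`true`) than right
turns (`false`) contains two cyclically consecutive left turns. -/
theorem more_lefts_gives_consecutive_lefts (l : List Bool) (hl : l ≠ [])
    (h : l.count false < l.count true) :
    ∃ i, i < l.length ∧ l.getD i false = true ∧
      l.getD ((i + 1) % l.length) false = true := by
  by_contra hc
  have hpos : 0 < l.length := List.length_pos_iff.mpr hl
  obtain ⟨h1, h2, -⟩ := turn_aux l (fun i hi a b => hc ⟨i, by omega, a, by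
    rw [Nat.mod_eq_of_lt hi]; exact b⟩)
  obtain ⟨a, b⟩ := h2 (by omega)
  refine hc ⟨l.length - 1, by omega, b, ?_⟩
  rw [Nat.sub_add_cancel hpos, Nat.mod_self]
  exact a
end

section
/- There exist points A, B, C, D in three-dimensional Euclidean space (EuclideanSpace ℝ (Fin 3)) that are affinely independent and satisfy dist A B = 2, dist C D = √3, and dist A C = dist A D = dist B C = dist B D = √3. (This is the existence of the 'mixed' tetrahedron: the unique Euclidean tetrahedron with one edge of length 2 and five edges of length √3, used to metrize tetrahedra containing exactly one edge of degree 5 in a 5/6*-triangulation.) -/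
/-- Existence of the mixed tetrahedron: the Euclidean tetrahedron with one edge
of length 2 and five edges of length √3. -/
theorem mixed_tetrahedron_exists :
    ∃ A B C D : EuclideanSpace ℝ (Fin 3),
      AffineIndependent ℝ ![A, B, C, D] ∧
      dist A B = 2 ∧ dist C D = Real.sqrt 3 ∧
      dist A C = Real.sqrt 3 ∧ dist A D = Real.sqrt 3 ∧
      dist B C = Real.sqrt 3 ∧ dist B D = Real.sqrt 3 := by
  have h3 : Real.sqrt 3 ^ 2 = 3 := Real.sq_sqrt (by norm_num)
  have h5 : Real.sqrt 5 ^ 2 = 5 := Real.sq_sqrt (by norm_num)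
  have p3 : 0 < Real.sqrt 3 := by positivity
  have p5 : 0 < Real.sqrt 5 := by positivity
  refine ⟨!₂[1, 0, 0], !₂[-1, 0, 0], !₂[0, Real.sqrt 3 / 2, Real.sqrt 5 / 2],
    !₂[0, -(Real.sqrt 3 / 2), Real.sqrt 5 / 2], ?_, ?_, ?_, ?_, ?_, ?_, ?_⟩
  · rw [affineIndependent_iff_of_fintype]
    intro w hw h
    rw [Finset.weightedVSub_eq_linear_combination _ hw] at h
    have e0 := congrArg (fun v : EuclideanSpace ℝ (Fin 3) => v 0) h
    have e1 := congrArg (fun v : EuclideanSpace ℝ (Fin 3) => v 1) h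
    have e2 := congrArg (fun v : EuclideanSpace ℝ (Fin 3) => v 2) h
    simp [Fin.sum_univ_four] at e0 e1 e2 hw
    have f1 : w 2 - w 3 = 0 := by
      have : Real.sqrt 3 * (w 2 - w 3) = 0 := by linarith
      exact (mul_eq_zero.mp this).resolve_left p3.ne'
    have f2 : w 2 + w 3 = 0 := by
      have : Real.sqrt 5 * (w 2 + w 3) = 0 := by linarith
      exact (mul_eq_zero.mp this).resolve_left p5.ne'
    intro i
    fin_cases i <;> simp <;> linarith
  · rw [EuclideanSpace.dist_eq, Real.sqrt_eq_iff_mul_self_eq (by positivity) (by norm_num)]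
    simp [Fin.sum_univ_three, Real.dist_eq, sq_abs]
    try norm_num
  all_goals
    rw [EuclideanSpace.dist_eq]
    congr 1
    simp [Fin.sum_univ_three, Real.dist_eq, sq_abs]
    try nlinarith
end

section
/- Let A, B, C, D be points in EuclideanSpace ℝ (Fin 3) with dist A B = 2 and dist A C = dist A D = dist B C = dist B D = dist C D = √3 (the mixed tetrahedron), and let M be the midpoint of A and B. Then the angle ∠ C M D equals arccos(1/4). (Since C and D are equidistant from A and B, the vectors C − M and D − M are perpendicular to the edge AB, so ∠ C M D is the dihedral angle of the mixed tetrahedron along its unique edge of length 2, i.e. along the degree-5 edge.) -/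
theorem mid_dist_aux (A B C : EuclideanSpace ℝ (Fin 3))
    (hAB : dist A B = 2) (hAC : dist A C = Real.sqrt 3) (hBC : dist B C = Real.sqrt 3) :
    dist C (midpoint ℝ A B) = Real.sqrt 2 := by
  have h := EuclideanGeometry.dist_sq_add_dist_sq_eq_two_mul_dist_midpoint_sq_add_half_dist_sq C A B
  rw [dist_comm C A, dist_comm C B, hAC, hBC, hAB, Real.sq_sqrt (by norm_num)] at h
  rw [← Real.sqrt_sq (dist_nonneg (x := C) (y := midpoint ℝ A B))]
  congr 1
  linarith

/-- The dihedral angle of the mixed tetrahedron along its unique edge of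
length 2 (the degree-5 edge) is arccos(1/4). -/
theorem mixed_tetrahedron_dihedral_angle_long_edge
    (A B C D : EuclideanSpace ℝ (Fin 3))
    (hAB : dist A B = 2) (hAC : dist A C = Real.sqrt 3)
    (hAD : dist A D = Real.sqrt 3) (hBC : dist B C = Real.sqrt 3)
    (hBD : dist B D = Real.sqrt 3) (hCD : dist C D = Real.sqrt 3) :
    EuclideanGeometry.angle C (midpoint ℝ A B) D = Real.arccos (1 / 4) := by
  have h1 := mid_dist_aux A B C hAB hAC hBC
  have h2 := mid_dist_aux A B D hAB hAD hBD
  have h := EuclideanGeometry.law_cos C (midpoint ℝ A B) D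
  have s2 : Real.sqrt 2 * Real.sqrt 2 = 2 := Real.mul_self_sqrt (by norm_num)
  have s3 : Real.sqrt 3 * Real.sqrt 3 = 3 := Real.mul_self_sqrt (by norm_num)
  rw [h1, h2, hCD, mul_assoc 2, s2, s3] at h
  rw [← Real.arccos_cos (EuclideanGeometry.angle_nonneg C (midpoint ℝ A B) D)
    (EuclideanGeometry.angle_le_pi _ _ _)]
  congr 1
  linarith
end

section
/- Let A, B, C, D be points in EuclideanSpace ℝ (Fin 3) with dist A B = 2 and dist A C = dist A D = dist B C = dist B D = dist C D = √3 (the mixed tetrahedron), and let N be the midpoint of C and D. Then the angle ∠ A N B equals arccos(1/9), and moreover π/3 < arccos(1/9) < π/2. (Since A and B are equidistant from C and D, the vectors A − N and B − N are perpendicular to the edge CD, so ∠ A N B is the dihedral angle of the mixed tetrahedron along the degree-6 edge CD opposite to its long edge; this angle lies strictly between π/3 and π/2.) -/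
/-- The dihedral angle of the mixed tetrahedron along the degree-6 edge CD
opposite its long edge is arccos(1/9), which lies strictly between π/3 and
π/2. -/
theorem mixed_tetrahedron_dihedral_angle_opposite_edge
    (A B C D : EuclideanSpace ℝ (Fin 3))
    (hAB : dist A B = 2) (hAC : dist A C = Real.sqrt 3)
    (hAD : dist A D = Real.sqrt 3) (hBC : dist B C = Real.sqrt 3)
    (hBD : dist B D = Real.sqrt 3) (hCD : dist C D = Real.sqrt 3) :
    EuclideanGeometry.angle A (midpoint ℝ C D) B = Real.arccos (1 / 9) ∧
      Real.pi / 3 < Real.arccos (1 / 9) ∧ Real.arccos (1 / 9) < Real.pi / 2 := by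
  have h3 : Real.sqrt 3 ^ 2 = 3 := Real.sq_sqrt (by norm_num)
  have hA := EuclideanGeometry.dist_sq_add_dist_sq_eq_two_mul_dist_midpoint_sq_add_half_dist_sq A C D
  have hB := EuclideanGeometry.dist_sq_add_dist_sq_eq_two_mul_dist_midpoint_sq_add_half_dist_sq B C D
  have hL := EuclideanGeometry.law_cos A (midpoint ℝ C D) B
  rw [hAC, hAD, hCD] at hA
  rw [hBC, hBD, hCD] at hB
  have hA' : dist A (midpoint ℝ C D) = 3 / 2 := by
    have := dist_nonneg (x := A) (y := midpoint ℝ C D)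
    nlinarith
  have hB' : dist B (midpoint ℝ C D) = 3 / 2 := by
    have := dist_nonneg (x := B) (y := midpoint ℝ C D)
    nlinarith
  rw [hAB, hA', hB'] at hL
  have hc : Real.cos (EuclideanGeometry.angle A (midpoint ℝ C D) B) = 1 / 9 := by linarith
  refine ⟨?_, ?_, ?_⟩
  · rw [← hc, Real.arccos_cos (EuclideanGeometry.angle_nonneg _ _ _)
      (EuclideanGeometry.angle_le_pi _ _ _)]
  · have h : Real.arccos (1 / 2) = Real.pi / 3 := by
      rw [← Real.cos_pi_div_three, Real.arccos_cos] <;> linarith [Real.pi_pos]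
    rw [← h]
    exact Real.arccos_lt_arccos (by norm_num) (by norm_num) (by norm_num)
  · exact Real.arccos_lt_pi_div_two.2 (by norm_num)
end

section
/- Let A, B, C, D be points in EuclideanSpace ℝ (Fin 3) with dist A B = 2 and dist A C = dist A D = dist B C = dist B D = dist C D = √3 (the mixed tetrahedron). Let P be the orthogonal projection of B onto the line through A and C, and let Q be the orthogonal projection of D onto the line through A and C. Then the angle between the vectors B − P and D − Q equals arccos(√6/6), and moreover π/3 < arccos(√6/6) < π/2. (The vectors B − P and D − Q are perpendicular to the edge AC, so this angle is the dihedral angle of the mixed tetrahedron along the degree-6 edge AC adjacent to its long edge; this angle lies strictly between π/3 and π/2.) -/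
lemma proj_line_aux (A C X Y : EuclideanSpace ℝ (Fin 3))
    (hY : Y = EuclideanGeometry.orthogonalProjection (affineSpan ℝ {A, C}) X) :
    ∃ t : ℝ, X - Y = (X - A) - t • (C - A) ∧ inner ℝ (X - A) (C - A) = t * ‖C - A‖ ^ 2 := by
  have h1 : Y ∈ affineSpan ℝ {A, C} := by
    rw [hY]; exact EuclideanGeometry.orthogonalProjection_mem _
  have h2 : X -ᵥ Y ∈ (affineSpan ℝ {A, C}).directionᗮ := by
    rw [hY]; exact EuclideanGeometry.vsub_orthogonalProjection_mem_direction_orthogonal _ _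
  obtain ⟨t, ht⟩ := mem_affineSpan_pair_iff_exists_lineMap_eq.1 h1
  have h3 : C -ᵥ A ∈ (affineSpan ℝ {A, C}).direction :=
    AffineSubspace.vsub_mem_direction (right_mem_affineSpan_pair ℝ A C)
      (left_mem_affineSpan_pair ℝ A C)
  have h4 := Submodule.inner_left_of_mem_orthogonal h3 h2
  have e : X - Y = (X - A) - t • (C - A) := by
    rw [← ht, AffineMap.lineMap_apply]
    simp only [vsub_eq_sub, vadd_eq_add]
    abel
  refine ⟨t, e, ?_⟩
  simp only [vsub_eq_sub] at h4
  rw [e, inner_sub_left, real_inner_smul_left, real_inner_self_eq_norm_sq] at h4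
  linarith

/-- The dihedral angle of the mixed tetrahedron along the degree-6 edge AC
adjacent to its long edge is arccos(√6/6), which lies strictly between π/3 and
π/2.  Here the dihedral angle is measured as the angle between the
perpendiculars from B and D to the line through A and C. -/
theorem mixed_tetrahedron_dihedral_angle_adjacent_edge
    (A B C D : EuclideanSpace ℝ (Fin 3))
    (hAB : dist A B = 2) (hAC : dist A C = Real.sqrt 3)
    (hAD : dist A D = Real.sqrt 3) (hBC : dist B C = Real.sqrt 3)
    (hBD : dist B D = Real.sqrt 3) (hCD : dist C D = Real.sqrt 3)
    (P Q : EuclideanSpace ℝ (Fin 3))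
    (hP : P = EuclideanGeometry.orthogonalProjection
      (affineSpan ℝ {A, C}) B)
    (hQ : Q = EuclideanGeometry.orthogonalProjection
      (affineSpan ℝ {A, C}) D) :
    InnerProductGeometry.angle (B - P) (D - Q) = Real.arccos (Real.sqrt 6 / 6) ∧
      Real.pi / 3 < Real.arccos (Real.sqrt 6 / 6) ∧
      Real.arccos (Real.sqrt 6 / 6) < Real.pi / 2 := by
  have s3 : Real.sqrt 3 ^ 2 = 3 := Real.sq_sqrt (by norm_num)
  have s6 : Real.sqrt 6 ^ 2 = 6 := Real.sq_sqrt (by norm_num)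
  have p6 : 0 < Real.sqrt 6 := Real.sqrt_pos.2 (by norm_num)
  obtain ⟨t, e1, f1⟩ := proj_line_aux A C B P hP
  obtain ⟨u, e2, f2⟩ := proj_line_aux A C D Q hQ
  rw [e1, e2]
  have nb : ‖B - A‖ = 2 := by rw [← dist_eq_norm, dist_comm]; exact hAB
  have nc : ‖C - A‖ ^ 2 = 3 := by rw [← dist_eq_norm, dist_comm, hAC, s3]
  have nd : ‖D - A‖ ^ 2 = 3 := by rw [← dist_eq_norm, dist_comm, hAD, s3]
  have nbc : ‖(B - A) - (C - A)‖ ^ 2 = 3 := by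
    rw [sub_sub_sub_cancel_right, ← dist_eq_norm, hBC, s3]
  have nbd : ‖(B - A) - (D - A)‖ ^ 2 = 3 := by
    rw [sub_sub_sub_cancel_right, ← dist_eq_norm, hBD, s3]
  have ncd : ‖(D - A) - (C - A)‖ ^ 2 = 3 := by
    rw [sub_sub_sub_cancel_right, ← dist_eq_norm, dist_comm, hCD, s3]
  generalize B - A = b at *
  generalize C - A = c at *
  generalize D - A = d at *
  rw [norm_sub_sq_real] at nbc nbd ncd
  rw [nb] at nbc nbd
  have ibc : inner ℝ b c = 2 := by linarith
  have ibd : inner ℝ b d = 2 := by linarith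
  have idc : inner ℝ d c = 3 / 2 := by linarith
  have ht : t = 2 / 3 := by rw [nc] at f1; linarith
  have hu : u = 1 / 2 := by rw [nc] at f2; linarith
  subst ht hu
  have n1 : ‖b - (2 / 3 : ℝ) • c‖ ^ 2 = 8 / 3 := by
    rw [norm_sub_sq_real, real_inner_smul_right, norm_smul, mul_pow, nc, nb, ibc]; norm_num
  have n2 : ‖d - (1 / 2 : ℝ) • c‖ ^ 2 = 9 / 4 := by
    rw [norm_sub_sq_real, real_inner_smul_right, norm_smul, mul_pow, nc, nd, idc]; norm_num
  have i12 : inner ℝ (b - (2 / 3 : ℝ) • c) (d - (1 / 2 : ℝ) • c) = 1 := by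
    simp only [inner_sub_left, inner_sub_right, real_inner_smul_left, real_inner_smul_right,
      real_inner_self_eq_norm_sq, nc, ibc, ibd, real_inner_comm d c, idc]
    norm_num
  have hn : ‖b - (2 / 3 : ℝ) • c‖ * ‖d - (1 / 2 : ℝ) • c‖ = Real.sqrt 6 := by
    rw [eq_comm, Real.sqrt_eq_iff_mul_self_eq (by norm_num) (by positivity), ← sq, mul_pow, n1, n2]
    norm_num
  refine ⟨?_, ?_, ?_⟩
  · rw [InnerProductGeometry.angle, i12, hn]
    congr 1
    rw [div_eq_div_iff p6.ne' (by norm_num)]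
    linarith
  · have : Real.pi / 3 = Real.arccos (1 / 2) := by
      rw [← Real.cos_pi_div_three, Real.arccos_cos (by positivity) (by linarith [Real.pi_pos])]
    rw [this]
    apply Real.arccos_lt_arccos <;> nlinarith
  · rw [Real.arccos_lt_pi_div_two]
    positivity
end

section
/- Let A, B, C, D be points in EuclideanSpace ℝ (Fin 3) with dist A B = 2, dist C D = 2, and dist A C = dist A D = dist B C = dist B D = √3 (the Coxeter tetrahedron). Let P be the orthogonal projection of B onto the line through A and C, and let Q be the orthogonal projection of D onto the line through A and C. Then the angle between the vectors B − P and D − Q equals π/3. (The vectors B − P and D − Q are perpendicular to the edge AC, so this angle is the dihedral angle of the Coxeter tetrahedron along the length-√3 edge AC, i.e. along a degree-6 edge: it equals exactly π/3.) -/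
open scoped RealInnerProductSpace in
lemma foot_aux (A C X P : EuclideanSpace ℝ (Fin 3))
    (hc : ⟪C - A, C - A⟫ = 3)
    (hP : P = EuclideanGeometry.orthogonalProjection
      (affineSpan ℝ {A, C}) X) :
    X - P = (X - A) - (⟪X - A, C - A⟫ / 3) • (C - A) := by
  have h1 : P ∈ affineSpan ℝ {A, C} := by
    rw [hP]; exact EuclideanGeometry.orthogonalProjection_mem X
  have h2 : X -ᵥ P ∈ (affineSpan ℝ {A, C}).directionᗮ := by
    rw [hP]
    exact EuclideanGeometry.vsub_orthogonalProjection_mem_direction_orthogonal _ X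
  have h3 : C -ᵥ A ∈ (affineSpan ℝ {A, C}).direction :=
    AffineSubspace.vsub_mem_direction (right_mem_affineSpan_pair ℝ A C)
      (left_mem_affineSpan_pair ℝ A C)
  have h4 := Submodule.inner_right_of_mem_orthogonal h3 h2
  obtain ⟨t, ht⟩ := (mem_affineSpan_pair_iff_exists_lineMap_eq).1 h1
  simp only [AffineMap.lineMap_apply, vsub_eq_sub, vadd_eq_add] at ht h4
  have e : X - P = (X - A) - t • (C - A) := by rw [← ht]; abel
  rw [e, inner_sub_right, inner_smul_right, hc, real_inner_comm] at h4
  rw [e, show t = ⟪X - A, C - A⟫ / 3 by linarith]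

/-- The dihedral angle of the Coxeter tetrahedron along the length-√3 edge AC
(a degree-6 edge) is exactly π/3.  Here the dihedral angle is measured as the
angle between the perpendiculars from B and D to the line through A and C. -/
theorem coxeter_tetrahedron_dihedral_angle_short_edge
    (A B C D : EuclideanSpace ℝ (Fin 3))
    (hAB : dist A B = 2) (hCD : dist C D = 2)
    (hAC : dist A C = Real.sqrt 3) (hAD : dist A D = Real.sqrt 3)
    (hBC : dist B C = Real.sqrt 3) (hBD : dist B D = Real.sqrt 3)
    (P Q : EuclideanSpace ℝ (Fin 3))
    (hP : P = EuclideanGeometry.orthogonalProjection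
      (affineSpan ℝ {A, C}) B)
    (hQ : Q = EuclideanGeometry.orthogonalProjection
      (affineSpan ℝ {A, C}) D) :
    InnerProductGeometry.angle (B - P) (D - Q) = Real.pi / 3 := by
  have s3 : Real.sqrt 3 ^ 2 = 3 := Real.sq_sqrt (by norm_num)
  have key : ∀ X Y : EuclideanSpace ℝ (Fin 3),
      inner ℝ (X - A) (Y - A) = (dist A X ^ 2 + dist A Y ^ 2 - dist X Y ^ 2) / 2 := by
    intro X Y
    have h := norm_sub_sq_real (X - A) (Y - A)
    rw [sub_sub_sub_cancel_right] at h
    rw [dist_comm A X, dist_comm A Y, dist_eq_norm, dist_eq_norm, dist_eq_norm]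
    linarith
  have cc : inner ℝ (C - A) (C - A) = (3 : ℝ) := by rw [key, hAC, dist_self, s3]; norm_num
  have dd : inner ℝ (D - A) (D - A) = (3 : ℝ) := by rw [key, hAD, dist_self, s3]; norm_num
  have bb : inner ℝ (B - A) (B - A) = (4 : ℝ) := by rw [key, hAB, dist_self]; norm_num
  have bc : inner ℝ (B - A) (C - A) = (2 : ℝ) := by rw [key, hAB, hAC, hBC, s3]; norm_num
  have bd : inner ℝ (B - A) (D - A) = (2 : ℝ) := by rw [key, hAB, hAD, hBD, s3]; norm_num
  have dc : inner ℝ (D - A) (C - A) = (1 : ℝ) := by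
    rw [key, hAD, hAC, dist_comm D C, hCD, s3]; norm_num
  have cb : inner ℝ (C - A) (B - A) = (2 : ℝ) := by rw [real_inner_comm, bc]
  have cd : inner ℝ (C - A) (D - A) = (1 : ℝ) := by rw [real_inner_comm, dc]
  have eB := foot_aux A C B P cc hP
  have eD := foot_aux A C D Q cc hQ
  rw [bc] at eB
  rw [dc] at eD
  clear key
  generalize B - A = b at *
  generalize C - A = c at *
  generalize D - A = d at *
  have i1 : inner ℝ (B - P) (D - Q) = (4 / 3 : ℝ) := by
    rw [eB, eD]
    simp only [inner_sub_left, inner_sub_right, real_inner_smul_left, real_inner_smul_right,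
      cc, bc, bd, cd]
    norm_num
  have n1 : ‖B - P‖ = Real.sqrt (8 / 3) := by
    rw [norm_eq_sqrt_real_inner, eB]
    simp only [inner_sub_left, inner_sub_right, real_inner_smul_left, real_inner_smul_right,
      cc, bc, bb, cb]
    norm_num
  have n2 : ‖D - Q‖ = Real.sqrt (8 / 3) := by
    rw [norm_eq_sqrt_real_inner, eD]
    simp only [inner_sub_left, inner_sub_right, real_inner_smul_left, real_inner_smul_right,
      cc, dc, dd, cd]
    norm_num
  rw [InnerProductGeometry.angle, i1, n1, n2, Real.mul_self_sqrt (by norm_num),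
    show (4 / 3 / (8 / 3) : ℝ) = Real.cos (Real.pi / 3) by rw [Real.cos_pi_div_three]; norm_num]
  exact Real.arccos_cos (by positivity) (by linarith [Real.pi_pos])
end
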